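/- arXiv:2406.10624 — 4 statements merged into one kernel-verified Lean document; each statement's English description precedes it below -/
import Mathlib

section
/- Let C be a regular Ord-category and D ↣ X×Y an ideal. Then D satisfies the Ord-difunctionality condition (for all x,u,u': A→X and y,y',v: A→Y with (x,y) ∈_A D, y ≼ y', (u,y') ∈_A D, u ≼ u', (u',v) ∈_A D, one has (x,v) ∈_A D) if and only if D ≅ D∘D^*∘D, equivalently D ≅ D∘D°∘D. -/
open CategoryTheory

universe w v u

/-- An `Ord`-enrichment of a category: a preorder on each hom-set,
preserved by composition on both sides. -/
class OrdEnrichment (C : Type u) [Category.{v} C] : Type (max u v) where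
  ord : ∀ {X Y : C}, (X ⟶ Y) → (X ⟶ Y) → Prop
  ord_refl : ∀ {X Y : C} (f : X ⟶ Y), ord f f
  ord_trans : ∀ {X Y : C} {f g h : X ⟶ Y}, ord f g → ord g h → ord f h
  precomp_ord : ∀ {X Y Z : C} (e : X ⟶ Y) {f g : Y ⟶ Z}, ord f g → ord (e ≫ f) (e ≫ g)
  postcomp_ord : ∀ {X Y Z : C} {f g : X ⟶ Y} (h : Y ⟶ Z), ord f g → ord (f ≫ h) (g ≫ h)

/-- The preorder on hom-sets of an `Ord`-category. -/
def homLe {C : Type u} [Category.{v} C] [OrdEnrichment C] {X Y : C} (f g : X ⟶ Y) : Prop :=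
  OrdEnrichment.ord f g

infixl:50 " ≼ " => homLe

section

variable {C : Type u} [Category.{v} C] [OrdEnrichment C]

/-- A full (ff-) morphism. -/
def IsFF {X Y : C} (m : X ⟶ Y) : Prop :=
  ∀ {A : C} (a a' : A ⟶ X), (a ≫ m) ≼ (a' ≫ m) → a ≼ a'

/-- An ff-monomorphism: a full monomorphism. -/
def IsFFMono {X Y : C} (m : X ⟶ Y) : Prop := IsFF m ∧ Mono m

/-- An so-morphism: a morphism left orthogonal to every ff-monomorphism. -/
def IsSO {A B : C} (e : A ⟶ B) : Prop :=
  ∀ {X Y : C} (m : X ⟶ Y), IsFFMono m → ∀ (u : A ⟶ X) (v : B ⟶ Y),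
    u ≫ m = e ≫ v → ∃ d : B ⟶ X, e ≫ d = u ∧ d ≫ m = v

/-- The (strict) comma object square for the ordered pair `(f, g)`. -/
structure IsCommaSq {X Y Z : C} (f : X ⟶ Y) (g : Z ⟶ Y) (P : C)
    (π₁ : P ⟶ X) (π₂ : P ⟶ Z) : Prop where
  le : (π₁ ≫ f) ≼ (π₂ ≫ g)
  lift : ∀ {A : C} (α : A ⟶ X) (β : A ⟶ Z), (α ≫ f) ≼ (β ≫ g) →
    ∃! h : A ⟶ P, h ≫ π₁ = α ∧ h ≫ π₂ = β
  lift_ord : ∀ {A : C} {h h' : A ⟶ P}, (h ≫ π₁) ≼ (h' ≫ π₁) → (h ≫ π₂) ≼ (h' ≫ π₂) → h ≼ h'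

/-- A 2-pullback square (pullback with the `Ord`-enriched universal property). -/
structure Is2Pullback {X Y Z : C} (f : X ⟶ Z) (g : Y ⟶ Z) (P : C)
    (p : P ⟶ X) (q : P ⟶ Y) : Prop where
  comm : p ≫ f = q ≫ g
  lift : ∀ {A : C} (a : A ⟶ X) (b : A ⟶ Y), a ≫ f = b ≫ g →
    ∃! h : A ⟶ P, h ≫ p = a ∧ h ≫ q = b
  lift_ord : ∀ {A : C} {h h' : A ⟶ P}, (h ≫ p) ≼ (h' ≫ p) → (h ≫ q) ≼ (h' ≫ q) → h ≼ h'

/-- A binary 2-product. -/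
structure Is2Product (X Y : C) (P : C) (p : P ⟶ X) (q : P ⟶ Y) : Prop where
  lift : ∀ {A : C} (a : A ⟶ X) (b : A ⟶ Y), ∃! h : A ⟶ P, h ≫ p = a ∧ h ≫ q = b
  lift_ord : ∀ {A : C} {h h' : A ⟶ P}, (h ≫ p) ≼ (h' ≫ p) → (h ≫ q) ≼ (h' ≫ q) → h ≼ h'

/-- A 2-equalizer. -/
structure Is2Equalizer {X Y : C} (f g : X ⟶ Y) (E : C) (i : E ⟶ X) : Prop where
  comm : i ≫ f = i ≫ g
  lift : ∀ {A : C} (a : A ⟶ X), a ≫ f = a ≫ g → ∃! h : A ⟶ E, h ≫ i = a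
  lift_ord : ∀ {A : C} {h h' : A ⟶ E}, (h ≫ i) ≼ (h' ≫ i) → h ≼ h'

/-- A bicoinserter of a parallel pair. -/
structure IsBicoinserter {X A E : C} (a b : X ⟶ A) (e : A ⟶ E) : Prop where
  le : (a ≫ e) ≼ (b ≫ e)
  desc : ∀ {F : C} (f : A ⟶ F), (a ≫ f) ≼ (b ≫ f) →
    ∃ t : E ⟶ F, (e ≫ t) ≼ f ∧ f ≼ (e ≫ t)
  desc_ord : ∀ {F : C} {f f' : A ⟶ F} {t t' : E ⟶ F},
    (e ≫ t) ≼ f → f ≼ (e ≫ t) → (e ≫ t') ≼ f' → f' ≼ (e ≫ t') → f ≼ f' → t ≼ t'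

/-- A relation from `X` to `Y` in an `Ord`-category: a jointly ff-monomorphic span. -/
structure RelStr (X Y : C) : Type (max u v) where
  obj : C
  p : obj ⟶ X
  q : obj ⟶ Y
  jointly_ff : ∀ {A : C} (a a' : A ⟶ obj), (a ≫ p) ≼ (a' ≫ p) → (a ≫ q) ≼ (a' ≫ q) → a ≼ a'
  jointly_mono : ∀ {A : C} (a a' : A ⟶ obj), a ≫ p = a' ≫ p → a ≫ q = a' ≫ q → a = a'

/-- `(x, y) ∈_A R`. -/
def RelStr.Mem {X Y : C} (R : RelStr X Y) {A : C} (x : A ⟶ X) (y : A ⟶ Y) : Prop :=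
  ∃ h : A ⟶ R.obj, h ≫ R.p = x ∧ h ≫ R.q = y

/-- `R ⊆ S`: `R` factors through `S` (over `X × Y`). -/
def RelStr.Sub {X Y : C} (R S : RelStr X Y) : Prop :=
  ∃ φ : R.obj ⟶ S.obj, φ ≫ S.p = R.p ∧ φ ≫ S.q = R.q

/-- `R ≅ S`: mutual factorisation. -/
def RelStr.Iso {X Y : C} (R S : RelStr X Y) : Prop := R.Sub S ∧ S.Sub R

/-- The opposite relation `R°`. -/
def RelStr.op {X Y : C} (R : RelStr X Y) : RelStr Y X where
  obj := R.obj
  p := R.q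
  q := R.p
  jointly_ff := fun a a' h1 h2 => R.jointly_ff a a' h2 h1
  jointly_mono := fun a a' h1 h2 => R.jointly_mono a a' h2 h1

/-- A relation is an (order) ideal when it is closed under lowering the first
coordinate and raising the second coordinate. -/
def IsIdealRel {X Y : C} (R : RelStr X Y) : Prop :=
  ∀ {A : C} (x x' : A ⟶ X) (y y' : A ⟶ Y), x' ≼ x → R.Mem x y → y ≼ y' → R.Mem x' y'

/-- The relation `f_♯` given by the span `(1_X, f)`. -/
def sharpRel {X Y : C} (f : X ⟶ Y) : RelStr X Y where
  obj := X
  p := 𝟙 X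
  q := f
  jointly_ff := fun a a' h1 _ => by simpa using h1
  jointly_mono := fun a a' h1 _ => by simpa using h1

/-- The relation `f°`, the opposite of `f_♯`. -/
def cosharpRel {X Y : C} (f : X ⟶ Y) : RelStr Y X := (sharpRel f).op

/-- `M` is the meet (intersection) `R ∧ S` of two relations. -/
def IsMeetRel {X Y : C} (R S M : RelStr X Y) : Prop :=
  M.Sub R ∧ M.Sub S ∧
    ∀ {A : C} (x : A ⟶ X) (y : A ⟶ Y), R.Mem x y → S.Mem x y → M.Mem x y

/-- `T` is the composite `S ∘ R` of the relations `R : X ↬ Y` and `S : Y ↬ Z`,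
obtained via the (so-morphism, ff-monomorphism) factorisation of the span
given by the 2-pullback over the middle object. -/
def IsCompositeRel {X Y Z : C} (R : RelStr X Y) (S : RelStr Y Z) (T : RelStr X Z) : Prop :=
  ∃ (P : C) (p₁ : P ⟶ R.obj) (p₂ : P ⟶ S.obj) (e : P ⟶ T.obj),
    Is2Pullback R.q S.p P p₁ p₂ ∧ IsSO e ∧ e ≫ T.p = p₁ ≫ R.p ∧ e ≫ T.q = p₂ ≫ S.q

/-- `R` is the ideal `f_* = f / 1_Y : X ↬ Y`. -/
def IsStarRel {X Y : C} (f : X ⟶ Y) (R : RelStr X Y) : Prop :=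
  IsCommaSq f (𝟙 Y) R.obj R.p R.q

/-- `R` is the ideal `f^* = 1_Y / f : Y ↬ X`. -/
def IsCostarRel {X Y : C} (f : X ⟶ Y) (R : RelStr Y X) : Prop :=
  IsCommaSq (𝟙 Y) f R.obj R.p R.q

/-- `R` is the identity ideal `I_X = 1_X / 1_X`. -/
def IsIdRel (X : C) (R : RelStr X X) : Prop :=
  IsCommaSq (𝟙 X) (𝟙 X) R.obj R.p R.q

/-- `S` is the 2-pullback of the relation `R ↣ X × Y` along `f × g`. -/
def IsRelPullback {X Y U V : C} (R : RelStr X Y) (f : U ⟶ X) (g : V ⟶ Y)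
    (S : RelStr U V) : Prop :=
  ∃ h : S.obj ⟶ R.obj, h ≫ R.p = S.p ≫ f ∧ h ≫ R.q = S.q ≫ g ∧
    ∀ {A : C} (a : A ⟶ U) (b : A ⟶ V) (c : A ⟶ R.obj),
      c ≫ R.p = a ≫ f → c ≫ R.q = b ≫ g →
      ∃ d : A ⟶ S.obj, d ≫ S.p = a ∧ d ≫ S.q = b ∧ d ≫ h = c

/-- A binary 2-coproduct. -/
structure Is2Coproduct (X Y : C) (P : C) (i : X ⟶ P) (j : Y ⟶ P) : Prop where
  desc : ∀ {A : C} (a : X ⟶ A) (b : Y ⟶ A), ∃! h : P ⟶ A, i ≫ h = a ∧ j ≫ h = b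
  desc_ord : ∀ {A : C} {h h' : P ⟶ A}, (i ≫ h) ≼ (i ≫ h') → (j ≫ h) ≼ (j ≫ h') → h ≼ h'

/-- A ternary 2-coproduct. -/
structure Is3Coproduct (X Y Z : C) (P : C) (i : X ⟶ P) (j : Y ⟶ P) (k : Z ⟶ P) : Prop where
  desc : ∀ {A : C} (a : X ⟶ A) (b : Y ⟶ A) (c : Z ⟶ A),
    ∃! h : P ⟶ A, i ≫ h = a ∧ j ≫ h = b ∧ k ≫ h = c
  desc_ord : ∀ {A : C} {h h' : P ⟶ A},
    (i ≫ h) ≼ (i ≫ h') → (j ≫ h) ≼ (j ≫ h') → (k ≫ h) ≼ (k ≫ h') → h ≼ h'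

/-- Reflexivity of a relation on `X`: the diagonal factors through it. -/
def ReflexiveRel {X : C} (R : RelStr X X) : Prop := R.Mem (𝟙 X) (𝟙 X)

/-- Transitivity of a relation on `X`: `R ∘ R ⊆ R`. -/
def TransitiveRel {X : C} (R : RelStr X X) : Prop :=
  ∀ T : RelStr X X, IsCompositeRel R R T → T.Sub R

/-- A congruence: a reflexive and transitive ideal. -/
def IsCongruence {X : C} (R : RelStr X X) : Prop :=
  IsIdealRel R ∧ ReflexiveRel R ∧ TransitiveRel R

/-- An effective congruence: `R ≅ f^* ∘ f_*` for some morphism `f`. -/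
def EffectiveCongruence {X : C} (R : RelStr X X) : Prop :=
  ∃ (Y : C) (f : X ⟶ Y) (Fstar : RelStr X Y) (Fco : RelStr Y X) (T : RelStr X X),
    IsStarRel f Fstar ∧ IsCostarRel f Fco ∧ IsCompositeRel Fstar Fco T ∧ R.Iso T

/-- The `Ord`-enriched difunctionality property of a relation. -/
def OrdDifunctional {X Y : C} (D : RelStr X Y) : Prop :=
  ∀ {A : C} (x u u' : A ⟶ X) (y y' v : A ⟶ Y),
    D.Mem x y → y ≼ y' → D.Mem u y' → u ≼ u' → D.Mem u' v → D.Mem x v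

end

/-- A regular `Ord`-category: finite weighted limits, an
(so-morphism, ff-monomorphism) factorisation system, so-morphisms stable under
2-pullbacks, and every so-morphism the bicoinserter of its comma object projections. -/
structure IsRegularOrd (C : Type u) [Category.{v} C] [OrdEnrichment C] : Prop where
  hasTerminal : ∃ T : C, ∀ A : C, ∃ f : A ⟶ T, ∀ g : A ⟶ T, g = f
  has2Products : ∀ X Y : C, ∃ (P : C) (p : P ⟶ X) (q : P ⟶ Y), Is2Product X Y P p q
  has2Equalizers : ∀ {X Y : C} (f g : X ⟶ Y), ∃ (E : C) (i : E ⟶ X), Is2Equalizer f g E i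
  has2Pullbacks : ∀ {X Y Z : C} (f : X ⟶ Z) (g : Y ⟶ Z),
    ∃ (P : C) (p : P ⟶ X) (q : P ⟶ Y), Is2Pullback f g P p q
  hasCommaObjects : ∀ {X Y Z : C} (f : X ⟶ Y) (g : Z ⟶ Y),
    ∃ (P : C) (p : P ⟶ X) (q : P ⟶ Z), IsCommaSq f g P p q
  fact : ∀ {X Y : C} (f : X ⟶ Y), ∃ (I : C) (e : X ⟶ I) (m : I ⟶ Y),
    IsSO e ∧ IsFFMono m ∧ e ≫ m = f
  so_pullback_stable : ∀ {X Y Z P : C} (f : X ⟶ Z) (g : Y ⟶ Z) (p : P ⟶ X) (q : P ⟶ Y),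
    Is2Pullback f g P p q → IsSO g → IsSO p
  so_bicoinserter : ∀ {A B P : C} (e : A ⟶ B), IsSO e →
    ∀ (π₁ π₂ : P ⟶ A), IsCommaSq e e P π₁ π₂ → IsBicoinserter π₁ π₂ e

/-- An `Ord`-Mal'tsev category: every ideal is `Ord`-difunctional. -/
def IsOrdMaltsev (C : Type u) [Category.{v} C] [OrdEnrichment C] : Prop :=
  ∀ (X Y : C) (D : RelStr X Y), IsIdealRel D → OrdDifunctional D

/-- An `Ord`-W-Mal'tsev object: every ideal is `Ord`-difunctional with respect to
generalised elements with domain `Y`. -/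
def IsOrdWMaltsevObj {C : Type u} [Category.{v} C] [OrdEnrichment C] (Y : C) : Prop :=
  ∀ (X Z : C) (R : RelStr X Z), IsIdealRel R →
    ∀ (x u u' : Y ⟶ X) (z z' v : Y ⟶ Z),
      R.Mem x z → z ≼ z' → R.Mem u z' → u ≼ u' → R.Mem u' v → R.Mem x v


section Helpers

variable {C : Type u} [Category.{v} C] [OrdEnrichment C]

theorem RelStr.Mem.precomp {X Y : C} {R : RelStr X Y} {A B : C} {x : A ⟶ X} {y : A ⟶ Y}
    (h : R.Mem x y) (e : B ⟶ A) : R.Mem (e ≫ x) (e ≫ y) := by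
  obtain ⟨k, rfl, rfl⟩ := h
  exact ⟨e ≫ k, by simp, by simp⟩

theorem RelStr.mem_self {X Y : C} (R : RelStr X Y) : R.Mem R.p R.q :=
  ⟨𝟙 _, by simp, by simp⟩

theorem RelStr.Sub.mem {X Y : C} {R S : RelStr X Y} (h : R.Sub S) {A : C} {x : A ⟶ X}
    {y : A ⟶ Y} (hm : R.Mem x y) : S.Mem x y := by
  obtain ⟨k, rfl, rfl⟩ := hm
  obtain ⟨f, h1, h2⟩ := h
  exact ⟨k ≫ f, by simp [h1], by simp [h2]⟩

theorem IsCompositeRel.mem {X Y Z : C} {R : RelStr X Y} {S : RelStr Y Z} {T : RelStr X Z}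
    (h : IsCompositeRel R S T) {A : C} {x : A ⟶ X} {y : A ⟶ Y} {z : A ⟶ Z}
    (hR : R.Mem x y) (hS : S.Mem y z) : T.Mem x z := by
  obtain ⟨P, p₁, p₂, e, hP, -, h1, h2⟩ := h
  obtain ⟨a, rfl, ha⟩ := hR
  obtain ⟨b, hb, rfl⟩ := hS
  obtain ⟨k, ⟨hk1, hk2⟩, -⟩ := hP.lift a b (ha.trans hb.symm)
  refine ⟨k ≫ e, ?_, ?_⟩
  · rw [Category.assoc, h1, ← hk1, Category.assoc]
  · rw [Category.assoc, h2, ← hk2, Category.assoc]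

theorem IsCompositeRel.elim (hC : IsRegularOrd C) {X Y Z : C} {R : RelStr X Y} {S : RelStr Y Z}
    {T : RelStr X Z} (h : IsCompositeRel R S T) {A : C} {x : A ⟶ X} {z : A ⟶ Z}
    (hT : T.Mem x z) : ∃ (B : C) (e : B ⟶ A) (y : B ⟶ Y), IsSO e ∧
      R.Mem (e ≫ x) y ∧ S.Mem y (e ≫ z) := by
  obtain ⟨P, p₁, p₂, e, hP, he, h1, h2⟩ := h
  obtain ⟨t, rfl, rfl⟩ := hT
  obtain ⟨B, f, g, hB⟩ := hC.has2Pullbacks t e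
  refine ⟨B, f, g ≫ p₁ ≫ R.q, hC.so_pullback_stable _ _ _ _ hB he, ⟨g ≫ p₁, ?_, ?_⟩,
    ⟨g ≫ p₂, ?_, ?_⟩⟩
  · rw [Category.assoc, ← h1, ← Category.assoc, ← hB.comm, Category.assoc]
  · simp
  · rw [hP.comm, Category.assoc]
  · rw [Category.assoc, ← h2, ← Category.assoc, ← hB.comm, Category.assoc]

theorem RelStr.mem_of_so (hC : IsRegularOrd C) {X Y : C} (R : RelStr X Y) {A B : C}
    {e : B ⟶ A} (he : IsSO e) {x : A ⟶ X} {y : A ⟶ Y} (h : R.Mem (e ≫ x) (e ≫ y)) :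
    R.Mem x y := by
  obtain ⟨P, p, q, hP⟩ := hC.has2Products X Y
  obtain ⟨m, ⟨hm1, hm2⟩, -⟩ := hP.lift R.p R.q
  obtain ⟨w, ⟨hw1, hw2⟩, -⟩ := hP.lift x y
  obtain ⟨k, hk1, hk2⟩ := h
  have hm : IsFFMono m := by
    constructor
    · intro A a a' h
      apply R.jointly_ff
      · have := OrdEnrichment.postcomp_ord p h
        simpa only [homLe, Category.assoc, hm1] using this
      · have := OrdEnrichment.postcomp_ord q h
        simpa only [homLe, Category.assoc, hm2] using this
    · constructor
      intro A a a' h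
      apply R.jointly_mono
      · rw [← hm1, ← Category.assoc, h, Category.assoc]
      · rw [← hm2, ← Category.assoc, h, Category.assoc]
  have hkm : k ≫ m = e ≫ w := by
    obtain ⟨c, -, hc⟩ := hP.lift (e ≫ x) (e ≫ y)
    rw [hc (k ≫ m) ⟨by simp [hm1, hk1], by simp [hm2, hk2]⟩,
      hc (e ≫ w) ⟨by simp [hw1], by simp [hw2]⟩]
  obtain ⟨d, -, hd⟩ := he m hm k w hkm
  refine ⟨d, ?_, ?_⟩
  · rw [← hm1, ← Category.assoc, hd, hw1]
  · rw [← hm2, ← Category.assoc, hd, hw2]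

/-- If every instance of `R ; E ; R` lies in `D`, the triple composite is contained in `D`. -/
theorem triple_sub (hC : IsRegularOrd C) {X Y : C} {D : RelStr X Y} {E : RelStr Y X}
    {U1 : RelStr X X} (hU1 : IsCompositeRel D E U1)
    {U2 : RelStr X Y} (hU2 : IsCompositeRel U1 D U2)
    (H : ∀ {A : C} (x u : A ⟶ X) (y v : A ⟶ Y), D.Mem x y → E.Mem y u → D.Mem u v → D.Mem x v) :
    U2.Sub D := by
  obtain ⟨B, e, b, he, h1, h2⟩ := hU2.elim hC U2.mem_self
  obtain ⟨B', e', a, he', h3, h4⟩ := hU1.elim hC h1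
  exact D.mem_of_so hC he (D.mem_of_so hC he' (H _ _ _ _ h3 h4 (h2.precomp e')))

end Helpers

/-- An ideal `D` is `Ord`-difunctional iff `D ≅ D ∘ D^* ∘ D`, equivalently
`D ≅ D ∘ D° ∘ D`. -/
theorem statement13 {C : Type u} [Category.{v} C] [OrdEnrichment C] (hC : IsRegularOrd C)
    {X Y : C} (D : RelStr X Y) (hD : IsIdealRel D)
    -- `D^* = (d₁)_* ∘ (d₂)^*`
    (D1star : RelStr D.obj X) (hD1star : IsStarRel D.p D1star)
    (D2co : RelStr Y D.obj) (hD2co : IsCostarRel D.q D2co)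
    (Dupper : RelStr Y X) (hDupper : IsCompositeRel D2co D1star Dupper)
    -- `D ∘ D^* ∘ D`
    (U1 : RelStr X X) (hU1 : IsCompositeRel D Dupper U1)
    (U2 : RelStr X Y) (hU2 : IsCompositeRel U1 D U2)
    -- `D ∘ D° ∘ D`
    (V1 : RelStr X X) (hV1 : IsCompositeRel D D.op V1)
    (V2 : RelStr X Y) (hV2 : IsCompositeRel V1 D V2) :
    (OrdDifunctional D ↔ D.Iso U2) ∧ (OrdDifunctional D ↔ D.Iso V2) := by
  have intro_upper : ∀ {A : C} (u u' : A ⟶ X) (y y' : A ⟶ Y), y ≼ y' → D.Mem u y' → u ≼ u' →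
      Dupper.Mem y u' := by
    rintro A u u' y y' hy ⟨d, rfl, rfl⟩ hu
    obtain ⟨k, ⟨hk1, hk2⟩, -⟩ := hD2co.lift y d (by simpa using hy)
    obtain ⟨l, ⟨hl1, hl2⟩, -⟩ := hD1star.lift d u' (by simpa using hu)
    exact hDupper.mem ⟨k, hk1, hk2⟩ ⟨l, hl1, hl2⟩
  refine ⟨⟨fun h => ⟨?_, ?_⟩, fun h => ?_⟩, ⟨fun h => ⟨?_, ?_⟩, fun h => ?_⟩⟩
  · exact hU2.mem (hU1.mem D.mem_self (intro_upper _ _ _ _ (OrdEnrichment.ord_refl _) D.mem_self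
      (OrdEnrichment.ord_refl _))) D.mem_self
  · refine triple_sub hC hU1 hU2 ?_
    intro A x u y v h1 h2 h3
    obtain ⟨B, e, d, he, ⟨k, hk1, hk2⟩, ⟨l, hl1, hl2⟩⟩ := hDupper.elim hC h2
    refine D.mem_of_so hC he (h (e ≫ x) (d ≫ D.p) (e ≫ u) (e ≫ y) (d ≫ D.q) (e ≫ v)
      (h1.precomp e) ?_ (D.mem_self.precomp d) ?_ (h3.precomp e))
    · have := OrdEnrichment.precomp_ord k hD2co.le
      rw [← Category.assoc, ← Category.assoc, hk1, hk2, Category.comp_id] at this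
      exact this
    · have := OrdEnrichment.precomp_ord l hD1star.le
      rw [← Category.assoc, ← Category.assoc, hl1, hl2, Category.comp_id] at this
      exact this
  · intro A x u u' y y' v h1 hy h2 hu h3
    exact h.2.mem (hU2.mem (hU1.mem h1 (intro_upper _ _ _ _ hy h2 hu)) h3)
  · have hop : D.op.Mem D.q D.p := D.op.mem_self
    exact hV2.mem (hV1.mem D.mem_self hop) D.mem_self
  · refine triple_sub hC hV1 hV2 ?_
    rintro A x u y v h1 ⟨k, hk1, hk2⟩ h3
    exact h x u u y y v h1 (OrdEnrichment.ord_refl _) ⟨k, hk2, hk1⟩ (OrdEnrichment.ord_refl _) h3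
  · intro A x u u' y y' v h1 hy h2 hu h3
    obtain ⟨k, hk1, hk2⟩ := h2
    have h1' := hD _ _ _ _ (OrdEnrichment.ord_refl _) h1 hy
    have h3' := hD _ _ _ _ hu h3 (OrdEnrichment.ord_refl _)
    exact h.2.mem (hV2.mem (hV1.mem h1' ⟨k, hk2, hk1⟩) h3')
end

section
/- Let V be a unital and integral quantale. A V-category Y is an Ord-W-Mal'tsev object in the Ord-category (V-Cat)^op if and only if Y is a symmetric V_∧-category, i.e. Y(x,y) = Y(y,x) and Y(x,y) ∧ Y(y,z) ≤ Y(x,z) for all x,y,z ∈ Y. -/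
open CategoryTheory

universe w v u

infixl:50 " ≼ " => homLe

/-- A unital and integral quantale: a complete lattice with an associative
multiplication preserving arbitrary joins in each variable, whose unit is the
top element. -/
structure QuantaleStr (V : Type w) [CompleteLattice V] : Type w where
  mul : V → V → V
  mul_assoc : ∀ a b c : V, mul (mul a b) c = mul a (mul b c)
  mul_sSup : ∀ (a : V) (s : Set V), mul a (sSup s) = ⨆ b ∈ s, mul a b
  sSup_mul : ∀ (s : Set V) (a : V), mul (sSup s) a = ⨆ b ∈ s, mul b a
  top_mul : ∀ a : V, mul ⊤ a = a
  mul_top : ∀ a : V, mul a ⊤ = a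

/-- A `V`-category for a unital and integral quantale `V` (the unit `k` is `⊤`). -/
structure VCatStr {V : Type w} [CompleteLattice V] (Q : QuantaleStr V) :
    Type (max w (u + 1)) where
  carrier : Type u
  hom : carrier → carrier → V
  refl_le : ∀ x, ⊤ ≤ hom x x
  comp_le : ∀ x y z, Q.mul (hom x y) (hom y z) ≤ hom x z

/-- `Y` is a symmetric `V_∧`-category. -/
def IsSymmetricVMeetCat {V : Type w} [CompleteLattice V] {Q : QuantaleStr V}
    (Y : VCatStr.{w, u} Q) : Prop :=
  (∀ x y : Y.carrier, Y.hom x y = Y.hom y x) ∧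
    ∀ x y z : Y.carrier, Y.hom x y ⊓ Y.hom y z ≤ Y.hom x z

/-- A `V`-functor. -/
structure VFun {V : Type w} [CompleteLattice V] {Q : QuantaleStr V}
    (X Y : VCatStr.{w, u} Q) : Type u where
  toFun : X.carrier → Y.carrier
  map_le : ∀ x x', X.hom x x' ≤ Y.hom (toFun x) (toFun x')

/-- The category `V`-`Cat` of `V`-categories and `V`-functors. -/
instance VCatStr.category {V : Type w} [CompleteLattice V] {Q : QuantaleStr V} :
    Category.{u} (VCatStr.{w, u} Q) where
  Hom X Y := VFun X Y
  id X := ⟨fun x => x, fun _ _ => le_rfl⟩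
  comp f g := ⟨fun x => g.toFun (f.toFun x), fun x x' =>
    le_trans (f.map_le x x') (g.map_le _ _)⟩
  id_comp := by intros; rfl
  comp_id := by intros; rfl
  assoc := by intros; rfl

/-- The natural `Ord`-enrichment of `(V`-`Cat)ᵒᵖ`: for `V`-functors
`f, g : X ⟶ Y` (i.e. morphisms `Y ⟶ X` of the opposite category),
`f ≼ g` iff `Y(f x, g x) = k` for all `x ∈ X`. -/
instance VCatStr.opOrdEnrichment {V : Type w} [CompleteLattice V] {Q : QuantaleStr V} :
    OrdEnrichment (VCatStr.{w, u} Q)ᵒᵖ where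
  ord {P R} u v := ∀ x : R.unop.carrier,
    P.unop.hom (u.unop.toFun x) (v.unop.toFun x) = ⊤
  ord_refl := by
    intro P R u x
    exact le_antisymm le_top (P.unop.refl_le _)
  ord_trans := by
    intro P R u v w huv hvw x
    have h := P.unop.comp_le (u.unop.toFun x) (v.unop.toFun x) (w.unop.toFun x)
    rw [huv x, hvw x, Q.top_mul] at h
    exact le_antisymm le_top h
  precomp_ord := by
    intro P R T e f g hfg x
    have h := e.unop.map_le (f.unop.toFun x) (g.unop.toFun x)
    rw [hfg x] at h
    exact le_antisymm le_top h
  postcomp_ord := by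
    intro P R T f g h hfg x
    exact hfg (h.unop.toFun x)

theorem QuantaleStr.mul_mono {V : Type w} [CompleteLattice V] (Q : QuantaleStr V)
    {a b c d : V} (h1 : a ≤ b) (h2 : c ≤ d) : Q.mul a c ≤ Q.mul b d := by
  have e1 : sSup {a, b} = b := by rw [sSup_pair]; exact sup_eq_right.2 h1
  have e2 : sSup {c, d} = d := by rw [sSup_pair]; exact sup_eq_right.2 h2
  calc Q.mul a c ≤ Q.mul b c := by
        conv_rhs => rw [← e1, Q.sSup_mul]
        exact le_iSup₂_of_le a (by simp) le_rfl
    _ ≤ Q.mul b d := by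
        conv_rhs => rw [← e2, Q.mul_sSup]
        exact le_iSup₂_of_le c (by simp) le_rfl

theorem QuantaleStr.bot_mul {V : Type w} [CompleteLattice V] (Q : QuantaleStr V)
    (a : V) : Q.mul ⊥ a = ⊥ := by
  have h := Q.sSup_mul ∅ a
  simpa using h

theorem QuantaleStr.mul_bot {V : Type w} [CompleteLattice V] (Q : QuantaleStr V)
    (a : V) : Q.mul a ⊥ = ⊥ := by
  have h := Q.mul_sSup a ∅
  simpa using h

theorem QuantaleStr.mul_le_left {V : Type w} [CompleteLattice V] (Q : QuantaleStr V)
    (a b : V) : Q.mul a b ≤ a := by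
  simpa [Q.mul_top] using Q.mul_mono (le_refl a) (le_top : b ≤ ⊤)

theorem QuantaleStr.mul_le_right {V : Type w} [CompleteLattice V] (Q : QuantaleStr V)
    (a b : V) : Q.mul a b ≤ b := by
  simpa [Q.top_mul] using Q.mul_mono (le_top : a ≤ ⊤) (le_refl b)

inductive CollPt (A B D : Type u) : Type u
  | lo : A → CollPt A B D
  | mid : B → CollPt A B D
  | hi : D → CollPt A B D

/-- Hom of the collage `X → R ← Z` freely lowering `p` and raising `q`. -/
def collHom {V : Type w} [CompleteLattice V] {Q : QuantaleStr V}
    {X R Z : VCatStr.{w, u} Q} (p : VFun X R) (q : VFun Z R) :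
    CollPt X.carrier R.carrier Z.carrier → CollPt X.carrier R.carrier Z.carrier → V
  | .lo a, .lo a' => X.hom a a'
  | .lo a, .mid r => R.hom (p.toFun a) r
  | .lo a, .hi b => R.hom (p.toFun a) (q.toFun b)
  | .mid _, .lo _ => ⊥
  | .mid r, .mid r' => R.hom r r'
  | .mid r, .hi b => R.hom r (q.toFun b)
  | .hi _, .lo _ => ⊥
  | .hi _, .mid _ => ⊥
  | .hi b, .hi b' => Z.hom b b'

def collCat {V : Type w} [CompleteLattice V] {Q : QuantaleStr V}
    {X R Z : VCatStr.{w, u} Q} (p : VFun X R) (q : VFun Z R) : VCatStr.{w, u} Q where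
  carrier := CollPt X.carrier R.carrier Z.carrier
  hom := collHom p q
  refl_le := by
    rintro (a | r | b)
    · exact X.refl_le a
    · exact R.refl_le r
    · exact Z.refl_le b
  comp_le := by
    rintro (a | r | b) (a' | r' | b') (a'' | r'' | b'') <;>
      simp only [collHom, Q.bot_mul, Q.mul_bot, bot_le, X.comp_le, R.comp_le, Z.comp_le] <;>
      first
      | exact (Q.mul_mono (p.map_le _ _) le_rfl).trans (R.comp_le _ _ _)
      | exact (Q.mul_mono le_rfl (q.map_le _ _)).trans (R.comp_le _ _ _)

/-- The indiscrete `V`-category on propositions. -/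
def indisc {V : Type w} [CompleteLattice V] (Q : QuantaleStr V) : VCatStr.{w, u} Q where
  carrier := ULift.{u} Prop
  hom _ _ := ⊤
  refl_le _ := le_rfl
  comp_le _ _ _ := le_top

theorem rel_surj {V : Type w} [CompleteLattice V] {Q : QuantaleStr V}
    {X Z : (VCatStr.{w, u} Q)ᵒᵖ} (R : RelStr X Z) (r : R.obj.unop.carrier) :
    (∃ a, R.p.unop.toFun a = r) ∨ (∃ b, R.q.unop.toFun b = r) := by
  let f : R.obj.unop ⟶ indisc Q := ⟨fun _ => ⟨True⟩, fun _ _ => le_top⟩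
  let g : R.obj.unop ⟶ indisc Q :=
    ⟨fun r => ⟨(∃ a, R.p.unop.toFun a = r) ∨ (∃ b, R.q.unop.toFun b = r)⟩, fun _ _ => le_top⟩
  have h : f.op = g.op := by
    apply R.jointly_mono
    · apply Quiver.Hom.unop_inj
      show VFun.mk _ _ = VFun.mk _ _
      congr 1
      funext a
      show ULift.up _ = ULift.up _
      congr 1
      exact (eq_true (Or.inl ⟨a, rfl⟩)).symm
    · apply Quiver.Hom.unop_inj
      show VFun.mk _ _ = VFun.mk _ _
      congr 1
      funext a
      show ULift.up _ = ULift.up _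
      congr 1
      exact (eq_true (Or.inr ⟨a, rfl⟩)).symm
  have h2 : f = g := Quiver.Hom.op_inj h
  have h3 : (f.toFun r) = (g.toFun r) := by rw [h2]
  have h4 : True = _ := congrArg ULift.down h3
  exact h4.mp trivial

/-- Pointwise form of membership. -/
theorem mem_iff {V : Type w} [CompleteLattice V] {Q : QuantaleStr V}
    {X Z A : (VCatStr.{w, u} Q)ᵒᵖ} (R : RelStr X Z) (x : A ⟶ X) (z : A ⟶ Z) :
    R.Mem x z ↔ ∃ h : VFun R.obj.unop A.unop,
      (∀ a, h.toFun (R.p.unop.toFun a) = x.unop.toFun a) ∧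
      (∀ b, h.toFun (R.q.unop.toFun b) = z.unop.toFun b) := by
  constructor
  · rintro ⟨h, rfl, rfl⟩
    exact ⟨h.unop, fun _ => rfl, fun _ => rfl⟩
  · rintro ⟨h, h1, h2⟩
    refine ⟨Quiver.Hom.op (V := VCatStr Q) h, ?_, ?_⟩
    · apply Quiver.Hom.unop_inj
      show VFun.mk _ _ = VFun.mk _ _
      congr 1
      exact funext h1
    · apply Quiver.Hom.unop_inj
      show VFun.mk _ _ = VFun.mk _ _
      congr 1
      exact funext h2

def ptCat {V : Type w} [CompleteLattice V] (Q : QuantaleStr V) : VCatStr.{w, u} Q where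
  carrier := PUnit
  hom _ _ := ⊤
  refl_le _ := le_rfl
  comp_le _ _ _ := le_top

def arrHom {V : Type w} [CompleteLattice V] (c : V) : ULift.{u} Bool → ULift.{u} Bool → V
  | ⟨false⟩, ⟨false⟩ => ⊤
  | ⟨false⟩, ⟨true⟩ => c
  | ⟨true⟩, ⟨false⟩ => ⊥
  | ⟨true⟩, ⟨true⟩ => ⊤

def arrCat {V : Type w} [CompleteLattice V] (Q : QuantaleStr V) (c : V) :
    VCatStr.{w, u} Q where
  carrier := ULift.{u} Bool
  hom := arrHom c
  refl_le := by rintro ⟨_ | _⟩ <;> exact le_rfl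
  comp_le := by
    rintro ⟨_ | _⟩ ⟨_ | _⟩ ⟨_ | _⟩ <;>
      simp [arrHom, Q.bot_mul, Q.mul_bot, Q.top_mul, Q.mul_top]

def ptFun {V : Type w} [CompleteLattice V] {Q : QuantaleStr V} {Y : VCatStr.{w, u} Q}
    (y : Y.carrier) : ptCat.{w, u} Q ⟶ Y :=
  ⟨fun _ => y, fun _ _ => Y.refl_le y⟩

def arrRel {V : Type w} [CompleteLattice V] (Q : QuantaleStr V) (c : V) :
    RelStr (Opposite.op (ptCat.{w, u} Q)) (Opposite.op (ptCat.{w, u} Q)) where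
  obj := Opposite.op (arrCat Q c)
  p := (ptFun (Y := arrCat Q c) ⟨false⟩).op
  q := (ptFun (Y := arrCat Q c) ⟨true⟩).op
  jointly_ff := by
    rintro A a a' h1 h2 ⟨_ | _⟩
    · exact h1 PUnit.unit
    · exact h2 PUnit.unit
  jointly_mono := by
    intro A a a' h1 h2
    have k1 := congrArg (fun t => VFun.toFun (Quiver.Hom.unop t) PUnit.unit) h1
    have k2 := congrArg (fun t => VFun.toFun (Quiver.Hom.unop t) PUnit.unit) h2
    apply Quiver.Hom.unop_inj
    show VFun.mk a.unop.toFun _ = VFun.mk a'.unop.toFun _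
    congr 1
    funext r
    rcases r with ⟨_ | _⟩
    · exact k1
    · exact k2

theorem arr_mem {V : Type w} [CompleteLattice V] (Q : QuantaleStr V) (c : V)
    {A : (VCatStr.{w, u} Q)ᵒᵖ} (x z : A ⟶ Opposite.op (ptCat.{w, u} Q)) :
    (arrRel Q c).Mem x z ↔
      c ≤ A.unop.hom (x.unop.toFun PUnit.unit) (z.unop.toFun PUnit.unit) := by
  rw [mem_iff]
  constructor
  · rintro ⟨h, h1, h2⟩
    have k1 := h1 PUnit.unit
    have k2 := h2 PUnit.unit
    have k := h.map_le ((arrRel Q c).p.unop.toFun PUnit.unit) ((arrRel Q c).q.unop.toFun PUnit.unit)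
    exact k.trans (le_of_eq (congrArg₂ A.unop.hom k1 k2))
  · intro hc
    refine ⟨⟨fun r => if r.down then z.unop.toFun PUnit.unit else x.unop.toFun PUnit.unit, ?_⟩,
      fun _ => rfl, fun _ => rfl⟩
    rintro ⟨_ | _⟩ ⟨_ | _⟩
    · exact le_top.trans (A.unop.refl_le _)
    · exact hc
    · exact bot_le
    · exact le_top.trans (A.unop.refl_le _)

theorem arr_ideal {V : Type w} [CompleteLattice V] (Q : QuantaleStr V) (c : V) :
    IsIdealRel (arrRel.{w, u} Q c) := by
  intro A x x' z z' hx hm hz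
  rw [arr_mem] at hm ⊢
  have e1 : A.unop.hom (x'.unop.toFun PUnit.unit) (x.unop.toFun PUnit.unit) = ⊤ := hx _
  have e2 : A.unop.hom (z.unop.toFun PUnit.unit) (z'.unop.toFun PUnit.unit) = ⊤ := hz _
  have h1 := A.unop.comp_le (x'.unop.toFun PUnit.unit) (x.unop.toFun PUnit.unit)
    (z.unop.toFun PUnit.unit)
  have h2 := A.unop.comp_le (x'.unop.toFun PUnit.unit) (z.unop.toFun PUnit.unit)
    (z'.unop.toFun PUnit.unit)
  rw [e1, Q.top_mul] at h1
  rw [e2, Q.mul_top] at h2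
  exact hm.trans (h1.trans h2)

theorem key_fwd {V : Type w} [CompleteLattice V] {Q : QuantaleStr V}
    {Y : VCatStr.{w, u} Q} (hY : IsOrdWMaltsevObj (Opposite.op Y)) (c : V)
    (x y u v : Y.carrier) (h1 : c ≤ Y.hom x y) (h2 : c ≤ Y.hom u y) (h3 : c ≤ Y.hom u v) :
    c ≤ Y.hom x v := by
  have h := hY _ _ (arrRel Q c) (arr_ideal Q c) (ptFun x).op (ptFun u).op (ptFun u).op
    (ptFun y).op (ptFun y).op (ptFun v).op ((arr_mem _ _ _ _).2 h1)
    (OrdEnrichment.ord_refl _) ((arr_mem _ _ _ _).2 h2) (OrdEnrichment.ord_refl _)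
    ((arr_mem _ _ _ _).2 h3)
  exact (arr_mem _ _ _ _).1 h

theorem ideal_split {V : Type w} [CompleteLattice V] {Q : QuantaleStr V}
    {X Z : (VCatStr.{w, u} Q)ᵒᵖ} (R : RelStr X Z) (hR : IsIdealRel R) :
    ∃ h : VFun R.obj.unop (collCat (X := X.unop) (Z := Z.unop) R.p.unop R.q.unop),
      (∀ a, h.toFun (R.p.unop.toFun a) = .lo a) ∧
      (∀ b, h.toFun (R.q.unop.toFun b) = .hi b) := by
  let A := collCat (X := X.unop) (Z := Z.unop) R.p.unop R.q.unop
  let m : R.obj.unop ⟶ A := ⟨.mid, fun _ _ => le_rfl⟩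
  let x' : X.unop ⟶ A := ⟨.lo, fun _ _ => le_rfl⟩
  let z' : Z.unop ⟶ A := ⟨.hi, fun _ _ => le_rfl⟩
  have h : R.Mem x'.op z'.op :=
    hR (m.op ≫ R.p) x'.op (m.op ≫ R.q) z'.op
      (fun a => le_antisymm le_top (R.obj.unop.refl_le (R.p.unop.toFun a))) ⟨m.op, rfl, rfl⟩
      (fun b => le_antisymm le_top (R.obj.unop.refl_le (R.q.unop.toFun b)))
  exact (mem_iff _ _ _).1 h

open Classical in
theorem key_bwd {V : Type w} [CompleteLattice V] {Q : QuantaleStr V}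
    {Y : VCatStr.{w, u} Q} (hY : IsSymmetricVMeetCat Y) :
    IsOrdWMaltsevObj (Opposite.op Y) := by
  intro X Z R hR x u u' z z' v h1 hz h2 hu h3
  obtain ⟨h, hp, hq⟩ := ideal_split R hR
  obtain ⟨f1, f1p, f1q⟩ := (mem_iff _ _ _).1 h1
  obtain ⟨f2, f2p, f2q⟩ := (mem_iff _ _ _).1 h2
  obtain ⟨f3, f3p, f3q⟩ := (mem_iff _ _ _).1 h3
  obtain ⟨hs, ht⟩ := hY
  rw [mem_iff]
  let g : CollPt X.unop.carrier R.obj.unop.carrier Z.unop.carrier → Y.carrier := fun t =>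
    match t with
    | .lo a => x.unop.toFun a
    | .mid r => f1.toFun r
    | .hi b => v.unop.toFun b
  refine ⟨⟨fun r => g (h.toFun r), ?_⟩, fun a => ?_, fun b => ?_⟩
  · intro r r'
    have hm := h.map_le r r'
    rcases rel_surj R r with ⟨a, rfl⟩ | ⟨b, rfl⟩ <;>
    rcases rel_surj R r' with ⟨a', rfl⟩ | ⟨b', rfl⟩
    · rw [hp, hp] at hm ⊢
      exact hm.trans (x.unop.map_le a a')
    · rw [hp, hq]
      have k1 := f1.map_le (R.p.unop.toFun a) (R.q.unop.toFun b')
      have k2 := f2.map_le (R.p.unop.toFun a) (R.q.unop.toFun b')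
      have k3 := f3.map_le (R.p.unop.toFun a) (R.q.unop.toFun b')
      rw [f1p, f1q] at k1
      rw [f2p, f2q] at k2
      rw [f3p, f3q] at k3
      have e1 : Y.hom (z.unop.toFun b') (z'.unop.toFun b') = ⊤ := hz b'
      have e2 : Y.hom (u.unop.toFun a) (u'.unop.toFun a) = ⊤ := hu a
      have k2' := k2.trans (hs _ _).le
      have l1 := (le_inf k1 (le_top.trans e1.ge)).trans (ht _ _ _)
      have l2 := (le_inf l1 k2').trans (ht _ _ _)
      have l3 := (le_inf l2 (le_top.trans e2.ge)).trans (ht _ _ _)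
      exact (le_inf l3 k3).trans (ht _ _ _)
    · rw [hq, hp] at hm
      exact hm.trans bot_le
    · rw [hq, hq] at hm ⊢
      exact hm.trans (v.unop.map_le b b')
  · show g (h.toFun _) = _
    rw [hp]
  · show g (h.toFun _) = _
    rw [hq]

/-- A `V`-category is an `Ord`-W-Mal'tsev object in `(V`-`Cat)ᵒᵖ` iff it is a
symmetric `V_∧`-category. -/
theorem statement17 {V : Type w} [CompleteLattice V] (Q : QuantaleStr V)
    (Y : VCatStr.{w, u} Q) :
    IsOrdWMaltsevObj (Opposite.op Y) ↔ IsSymmetricVMeetCat Y := by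
  constructor
  · intro hY
    have sym : ∀ x y : Y.carrier, Y.hom x y ≤ Y.hom y x := fun x y =>
      key_fwd hY _ y y x x (le_top.trans (Y.refl_le y)) le_rfl (le_top.trans (Y.refl_le x))
    exact ⟨fun x y => le_antisymm (sym x y) (sym y x), fun x y z =>
      key_fwd hY _ x y y z inf_le_left (le_top.trans (Y.refl_le y)) inf_le_right⟩
  · exact key_bwd
end

section
/- Let V be a unital and integral quantale and Y a V-category. Then the inequality Y(y₁,y₂') ∧ Y(y₂,y₂') ∧ Y(y₂,y₁') ≤ Y(y₁,y₁') holds for all y₁,y₂,y₁',y₂' ∈ Y if and only if Y is a symmetric V_∧-category, i.e. Y(x,y) = Y(y,x) and Y(x,y) ∧ Y(y,z) ≤ Y(x,z) for all x,y,z ∈ Y. -/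
/-- The inequality `Y(y₁,y₂') ∧ Y(y₂,y₂') ∧ Y(y₂,y₁') ≤ Y(y₁,y₁')` holds for all
elements iff `Y` is a symmetric `V_∧`-category. -/
theorem statement18 {V : Type w} [CompleteLattice V] (Q : QuantaleStr V)
    (Y : VCatStr.{w, u} Q) :
    (∀ y1 y2 y1' y2' : Y.carrier,
        Y.hom y1 y2' ⊓ Y.hom y2 y2' ⊓ Y.hom y2 y1' ≤ Y.hom y1 y1') ↔
      IsSymmetricVMeetCat Y := by
  have hr : ∀ x, Y.hom x x = ⊤ := fun x => top_le_iff.mp (Y.refl_le x)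
  constructor
  · intro h
    have hs : ∀ x y : Y.carrier, Y.hom y x ≤ Y.hom x y := by
      intro x y
      have := h x y y x
      simpa [hr] using this
    refine ⟨fun x y => le_antisymm (hs y x) (hs x y), fun x y z => ?_⟩
    have := h x y z y
    simpa [hr] using this
  · rintro ⟨hs, ht⟩ y1 y2 y1' y2'
    have h1 := ht y1 y2' y2
    rw [hs y2' y2] at h1
    exact le_trans (inf_le_inf_right _ h1) (ht y1 y2 y1')
end

section
/- Let C be a regular Ord-category with binary coproducts and Y an object of C. Let e: 3Y ↠ D, ⟨d₁,d₂⟩: D ↣ 2Y×2Y be the (so-morphism, ff-monomorphism) factorisation of the morphism 3Y → 2Y×2Y whose three cocomponents are ⟨ι₁,ι₂⟩, ⟨ι₂,ι₂⟩ and ⟨ι₂,ι₁⟩ (so that (ι₁,ι₂) ∈_Y D, (ι₂,ι₂) ∈_Y D, (ι₂,ι₁) ∈_Y D). Then Y is an Ord-W-Mal'tsev object in C if and only if (ι₁,ι₁) ∈_Y D_*. -/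
open CategoryTheory

universe w v u

infixl:50 " ≼ " => homLe

/-- Membership in a relation descends along so-morphisms. -/
theorem mem_of_so_mem {C : Type u} [Category.{v} C] [OrdEnrichment C] (hC : IsRegularOrd C)
    {A B X Z : C} (e : A ⟶ B) (he : IsSO e) (R : RelStr X Z) (x : B ⟶ X) (z : B ⟶ Z)
    (h : R.Mem (e ≫ x) (e ≫ z)) : R.Mem x z := by
  obtain ⟨P, p, q, hP⟩ := hC.has2Products X Z
  obtain ⟨m, ⟨hm1, hm2⟩, -⟩ := hP.lift R.p R.q
  obtain ⟨n, ⟨hn1, hn2⟩, -⟩ := hP.lift x z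
  obtain ⟨w, hw1, hw2⟩ := h
  have hm : IsFFMono m := by
    refine ⟨?_, ⟨?_⟩⟩
    · intro A' s t hst
      have k1 := OrdEnrichment.postcomp_ord p hst
      have k2 := OrdEnrichment.postcomp_ord q hst
      simp only [Category.assoc, hm1, hm2] at k1 k2
      exact R.jointly_ff s t k1 k2
    · intro A' s t hst
      have k1 := congrArg (· ≫ p) hst
      have k2 := congrArg (· ≫ q) hst
      simp only [Category.assoc, hm1, hm2] at k1 k2
      exact R.jointly_mono s t k1 k2
  have hsq : w ≫ m = e ≫ n := by
    obtain ⟨k, -, hk⟩ := hP.lift (e ≫ x) (e ≫ z)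
    rw [hk (w ≫ m) ⟨by simp [hm1, hw1], by simp [hm2, hw2]⟩,
      hk (e ≫ n) ⟨by simp [hn1], by simp [hn2]⟩]
  obtain ⟨d, -, hd⟩ := he m hm w n hsq
  exact ⟨d, by rw [← hm1, ← Category.assoc, hd, hn1], by rw [← hm2, ← Category.assoc, hd, hn2]⟩

/-- The composite of two relations `f^*`-like and `g_*`-like is an ideal as soon as
both are ideals on the outer side. -/
theorem composite_ideal {C : Type u} [Category.{v} C] [OrdEnrichment C] (hC : IsRegularOrd C)
    {X Y Z : C} (R : RelStr X Y) (S : RelStr Y Z) (T : RelStr X Z)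
    (hR : IsIdealRel R) (hS : IsIdealRel S) (hT : IsCompositeRel R S T) : IsIdealRel T := by
  obtain ⟨P, p₁, p₂, e, hP, he, h1, h2⟩ := hT
  intro A x x' y y' hx hxy hy
  obtain ⟨h, hh1, hh2⟩ := hxy
  obtain ⟨Q, s, t, hQ⟩ := hC.has2Pullbacks h e
  have hs : IsSO s := hC.so_pullback_stable h e s t hQ he
  refine mem_of_so_mem hC s hs T x' y' ?_
  have m1 : R.Mem (s ≫ x) (t ≫ p₁ ≫ R.q) :=
    ⟨t ≫ p₁, by rw [← hh1, ← Category.assoc s, hQ.comm]; simp [h1], by simp⟩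
  have m2 : S.Mem (t ≫ p₁ ≫ R.q) (s ≫ y) :=
    ⟨t ≫ p₂, by simp [hP.comm], by rw [← hh2, ← Category.assoc s, hQ.comm]; simp [h2]⟩
  obtain ⟨r, hr1, hr2⟩ := hR _ _ _ _ (OrdEnrichment.precomp_ord s hx) m1
    (OrdEnrichment.ord_refl _)
  obtain ⟨k, hk1, hk2⟩ := hS _ _ _ _ (OrdEnrichment.ord_refl _) m2
    (OrdEnrichment.precomp_ord s hy)
  obtain ⟨l, ⟨hl1, hl2⟩, -⟩ := hP.lift r k (hr2.trans hk1.symm)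
  refine ⟨l ≫ e, ?_, ?_⟩
  · rw [Category.assoc, h1, ← Category.assoc, hl1, hr1]
  · rw [Category.assoc, h2, ← Category.assoc, hl2, hk2]

/-- Comma objects are ideals. -/
theorem comma_ideal {C : Type u} [Category.{v} C] [OrdEnrichment C]
    {X Y Z : C} (f : X ⟶ Y) (g : Z ⟶ Y) (R : RelStr X Z)
    (hR : IsCommaSq f g R.obj R.p R.q) : IsIdealRel R := by
  intro A x x' y y' hx hxy hy
  obtain ⟨h, rfl, rfl⟩ := hxy
  have k := OrdEnrichment.precomp_ord h hR.le
  simp only [← Category.assoc] at k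
  obtain ⟨l, hl, -⟩ := hR.lift x' y' (OrdEnrichment.ord_trans
    (OrdEnrichment.postcomp_ord f hx) (OrdEnrichment.ord_trans k
      (OrdEnrichment.postcomp_ord g hy)))
  exact ⟨l, hl⟩

/-- Object-wise characterisation of `Ord`-W-Mal'tsev objects in a regular
`Ord`-category with binary coproducts via the
(so-morphism, ff-monomorphism) factorisation of
`(⟨ι₁,ι₂⟩, ⟨ι₂,ι₂⟩, ⟨ι₂,ι₁⟩) : 3Y → 2Y × 2Y`. -/
theorem statement19 {C : Type u} [Category.{v} C] [OrdEnrichment C] (hC : IsRegularOrd C)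
    (hcoprod : ∀ A B : C, ∃ (P : C) (i : A ⟶ P) (j : B ⟶ P), Is2Coproduct A B P i j)
    (Y : C)
    (Y2 : C) (i1 i2 : Y ⟶ Y2) (h2 : Is2Coproduct Y Y Y2 i1 i2)
    (Y3 : C) (j1 j2 j3 : Y ⟶ Y3) (h3 : Is3Coproduct Y Y Y Y3 j1 j2 j3)
    (a b : Y3 ⟶ Y2)
    (ha1 : j1 ≫ a = i1) (ha2 : j2 ≫ a = i2) (ha3 : j3 ≫ a = i2)
    (hb1 : j1 ≫ b = i2) (hb2 : j2 ≫ b = i2) (hb3 : j3 ≫ b = i1)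
    (D : RelStr Y2 Y2) (e : Y3 ⟶ D.obj) (he : IsSO e)
    (hea : e ≫ D.p = a) (heb : e ≫ D.q = b)
    -- `D_* = (d₂)_* ∘ (d₁)^*`, the ideal generated by `D`
    (D1co : RelStr Y2 D.obj) (hD1co : IsCostarRel D.p D1co)
    (D2star : RelStr D.obj Y2) (hD2star : IsStarRel D.q D2star)
    (Dlower : RelStr Y2 Y2) (hDlower : IsCompositeRel D1co D2star Dlower) :
    IsOrdWMaltsevObj Y ↔ Dlower.Mem i1 i1 := by
  have hDl := hDlower
  obtain ⟨P, p₁, p₂, c, hP, hc, hc1, hc2⟩ := hDlower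
  constructor
  · intro hY
    have hI : IsIdealRel Dlower := composite_ideal hC D1co D2star Dlower
      (comma_ideal _ _ _ hD1co) (comma_ideal _ _ _ hD2star) hDl
    have hsub : D.Sub Dlower := by
      obtain ⟨r, ⟨hr1, hr2⟩, -⟩ := hD1co.lift D.p (𝟙 _)
        (by simp only [Category.comp_id, Category.id_comp]; exact OrdEnrichment.ord_refl _)
      obtain ⟨s, ⟨hs1, hs2⟩, -⟩ := hD2star.lift (𝟙 _) D.q
        (by simp only [Category.comp_id, Category.id_comp]; exact OrdEnrichment.ord_refl _)
      obtain ⟨l, ⟨hl1, hl2⟩, -⟩ := hP.lift r s (hr2.trans hs1.symm)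
      refine ⟨l ≫ c, ?_, ?_⟩
      · rw [Category.assoc, hc1, ← Category.assoc, hl1, hr1]
      · rw [Category.assoc, hc2, ← Category.assoc, hl2, hs2]
    obtain ⟨φ, hφ1, hφ2⟩ := hsub
    have hm : ∀ j : Y ⟶ Y3, Dlower.Mem (j ≫ a) (j ≫ b) := fun j =>
      ⟨j ≫ e ≫ φ, by simp [hφ1, hea], by simp [hφ2, heb]⟩
    have m1 := hm j1
    have m2 := hm j2
    have m3 := hm j3
    rw [ha1, hb1] at m1
    rw [ha2, hb2] at m2
    rw [ha3, hb3] at m3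
    exact hY _ _ Dlower hI i1 i2 i2 i2 i2 i1 m1 (OrdEnrichment.ord_refl _) m2
      (OrdEnrichment.ord_refl _) m3
  · intro hmem X Z R hR x u u' z z' v hxz hz hu hu' hv
    obtain ⟨w1, h11, h12⟩ := hR x x z z' (OrdEnrichment.ord_refl _) hxz hz
    obtain ⟨w2, h21, h22⟩ := hu
    obtain ⟨w3, h31, h32⟩ := hR u' u v v hu' hv (OrdEnrichment.ord_refl _)
    obtain ⟨f, ⟨hf1, hf2⟩, -⟩ := h2.desc x u
    obtain ⟨g, ⟨hg1, hg2⟩, -⟩ := h2.desc v z'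
    obtain ⟨w, ⟨hw1, hw2, hw3⟩, -⟩ := h3.desc w1 w2 w3
    have hext : ∀ {A : C} (s t : Y3 ⟶ A), j1 ≫ s = j1 ≫ t → j2 ≫ s = j2 ≫ t →
        j3 ≫ s = j3 ≫ t → s = t := by
      intro A s t q1 q2 q3
      obtain ⟨k, -, hk⟩ := h3.desc (j1 ≫ t) (j2 ≫ t) (j3 ≫ t)
      rw [hk s ⟨q1, q2, q3⟩, hk t ⟨rfl, rfl, rfl⟩]
    have hwp : w ≫ R.p = a ≫ f := by
      apply hext <;> simp only [← Category.assoc, hw1, hw2, hw3, ha1, ha2, ha3, hf1, hf2,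
        h11, h21, h31]
    have hwq : w ≫ R.q = b ≫ g := by
      apply hext <;> simp only [← Category.assoc, hw1, hw2, hw3, hb1, hb2, hb3, hg1, hg2,
        h12, h22, h32]
    have hD : R.Mem (D.p ≫ f) (D.q ≫ g) := by
      refine mem_of_so_mem hC e he R _ _ ⟨w, ?_, ?_⟩
      · rw [hwp, ← hea, Category.assoc]
      · rw [hwq, ← heb, Category.assoc]
    have hL : R.Mem (Dlower.p ≫ f) (Dlower.q ≫ g) := by
      refine mem_of_so_mem hC c hc R _ _ ?_
      obtain ⟨d, hd1, hd2⟩ := hD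
      have l1 := OrdEnrichment.postcomp_ord f (OrdEnrichment.precomp_ord p₁ hD1co.le)
      have l2 := OrdEnrichment.postcomp_ord g (OrdEnrichment.precomp_ord p₂ hD2star.le)
      refine hR (p₁ ≫ D1co.q ≫ D.p ≫ f) _ (p₁ ≫ D1co.q ≫ D.q ≫ g) _ ?_
        ⟨p₁ ≫ D1co.q ≫ d, by simp [hd1], by simp [hd2]⟩ ?_
      · rw [← Category.assoc, hc1]
        simpa only [homLe, Category.assoc, Category.comp_id, Category.id_comp] using l1
      · rw [← Category.assoc c, hc2, ← Category.assoc p₁, hP.comm]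
        simpa only [homLe, Category.assoc, Category.comp_id, Category.id_comp] using l2
    obtain ⟨t, ht1, ht2⟩ := hL
    obtain ⟨n, hn1, hn2⟩ := hmem
    refine ⟨n ≫ t, ?_, ?_⟩
    · rw [Category.assoc, ht1, ← Category.assoc, hn1, hf1]
    · rw [Category.assoc, ht2, ← Category.assoc, hn2, hg1]
end
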